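/- For any α > 0, any ε ∈ (0,1) and any tuple P = (P1,…,PM) of distributions with full support on a finite alphabet X, lim_{n→∞} τ*(n,α,ε|Ψ_n^Gut,P) = min_{j∈[M]} min_{(i,k)∈[M]^2, i≠k} D_{2α/(1+2α)}(P_j,P_i,P_k). -/

import Mathlib

open Filter Topology MeasureTheory

namespace Classification

variable {X : Type*} [Fintype X] [DecidableEq X]

/-- `P` is a probability mass function on the finite alphabet `X`. -/
def IsDist (P : X → ℝ) : Prop := (∀ x, 0 ≤ P x) ∧ ∑ x, P x = 1

/-- `P` has full support. -/
def FullSupport (P : X → ℝ) : Prop := ∀ x, 0 < P x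

/-- Empirical distribution (type) of a sequence `x : Fin m → X`. -/
noncomputable def empDist {m : ℕ} (x : Fin m → X) : X → ℝ :=
  fun a => ((Finset.univ.filter fun i => x i = a).card : ℝ) / m

/-- Real-valued KL divergence with the usual `0 · log 0 = 0` convention. -/
noncomputable def klDivR (Q P : X → ℝ) : ℝ := ∑ x, Q x * Real.log (Q x / P x)

open Classical in
/-- Extended-real-valued KL divergence: `⊤` when `Q` is not absolutely continuous w.r.t. `P`. -/
noncomputable def klDivE (Q P : X → ℝ) : EReal :=
  if ∀ x, P x = 0 → Q x = 0 then ((klDivR Q P : ℝ) : EReal) else ⊤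

/-- The mixture `(α P1 + P2) / (1 + α)`. -/
noncomputable def mix (P1 P2 : X → ℝ) (α : ℝ) : X → ℝ :=
  fun x => (α * P1 x + P2 x) / (1 + α)

/-- Generalized Jensen–Shannon divergence
`GJS(P1,P2,α) = α D(P1 ‖ (αP1+P2)/(1+α)) + D(P2 ‖ (αP1+P2)/(1+α))`. -/
noncomputable def GJS (P1 P2 : X → ℝ) (α : ℝ) : ℝ :=
  α * klDivR P1 (mix P1 P2 α) + klDivR P2 (mix P1 P2 α)

/-- Training sequence length `N = ⌈α n⌉`. -/
noncomputable def trainLen (α : ℝ) (n : ℕ) : ℕ := ⌈α * (n : ℝ)⌉₊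

/-- Probability of observing the sequence `x` under i.i.d. sampling from `P`. -/
noncomputable def seqProb (P : X → ℝ) {m : ℕ} (x : Fin m → X) : ℝ := ∏ i, P (x i)

/-- A binary classification test: output `true` means "declare H₂",
`false` means "declare H₁". -/
abbrev BTest (X : Type*) (α : ℝ) (n : ℕ) : Type _ :=
  (Fin (trainLen α n) → X) → (Fin (trainLen α n) → X) → (Fin n → X) → Bool

/-- Type-I error probability: probability of declaring `H₂` when `Y^n ~ P1` (hypothesis H₁). -/
noncomputable def beta1 {α : ℝ} {n : ℕ} (φ : BTest X α n) (P1 P2 : X → ℝ) : ℝ :=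
  ∑ x1 : Fin (trainLen α n) → X, ∑ x2 : Fin (trainLen α n) → X, ∑ y : Fin n → X,
    if φ x1 x2 y = true then seqProb P1 x1 * seqProb P2 x2 * seqProb P1 y else 0

/-- Type-II error probability: probability of declaring `H₁` when `Y^n ~ P2` (hypothesis H₂). -/
noncomputable def beta2 {α : ℝ} {n : ℕ} (φ : BTest X α n) (P1 P2 : X → ℝ) : ℝ :=
  ∑ x1 : Fin (trainLen α n) → X, ∑ x2 : Fin (trainLen α n) → X, ∑ y : Fin n → X,
    if φ x1 x2 y = false then seqProb P1 x1 * seqProb P2 x2 * seqProb P2 y else 0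

open Classical in
/-- Gutman's test with threshold `lam`: declare `H₁` iff `GJS(T̂_{x₁}, T̂_y, α) ≤ lam`. -/
noncomputable def gutman (α lam : ℝ) (n : ℕ) : BTest X α n :=
  fun x1 _ y => if GJS (empDist x1) (empDist y) α ≤ lam then false else true

open Classical in
/-- `- log x` as an extended real, with `⊤` at `x = 0`. -/
noncomputable def negLogE (x : ℝ) : EReal :=
  if x = 0 then ⊤ else ((-Real.log x : ℝ) : EReal)

/-- Gutman's exponent function
`F(P1,P2,α,lam) = min { α D(Q1‖P1) + D(Q2‖P2) : GJS(Q1,Q2,α) ≤ lam }` (as an inf in `EReal`). -/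
noncomputable def Fexp (P1 P2 : X → ℝ) (α lam : ℝ) : EReal :=
  sInf {v : EReal | ∃ Q1 Q2 : X → ℝ, IsDist Q1 ∧ IsDist Q2 ∧ GJS Q1 Q2 α ≤ lam ∧
    v = (α : EReal) * klDivE Q1 P1 + klDivE Q2 P2}

/-- Expectation of `f` under `P`. -/
noncomputable def expect (P : X → ℝ) (f : X → ℝ) : ℝ := ∑ x, P x * f x

/-- Variance of `f` under `P`. -/
noncomputable def varD (P : X → ℝ) (f : X → ℝ) : ℝ :=
  expect P (fun x => (f x - expect P f) ^ 2)

/-- Information density `ı₁(x) = log((1+α) P1(x) / (α P1(x) + P2(x)))`. -/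
noncomputable def iDens1 (P1 P2 : X → ℝ) (α : ℝ) (x : X) : ℝ :=
  Real.log ((1 + α) * P1 x / (α * P1 x + P2 x))

/-- Information density `ı₂(x) = log((1+α) P2(x) / (α P1(x) + P2(x)))`. -/
noncomputable def iDens2 (P1 P2 : X → ℝ) (α : ℝ) (x : X) : ℝ :=
  Real.log ((1 + α) * P2 x / (α * P1 x + P2 x))

/-- The dispersion `V(P1,P2,α) = α Var_{P1}[ı₁] + Var_{P2}[ı₂]`. -/
noncomputable def disp (P1 P2 : X → ℝ) (α : ℝ) : ℝ :=
  α * varD P1 (iDens1 P1 P2 α) + varD P2 (iDens2 P1 P2 α)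

/-- The standard Gaussian cumulative distribution function `Φ`. -/
noncomputable def stdCDF (x : ℝ) : ℝ :=
  (Real.sqrt (2 * Real.pi))⁻¹ * ∫ t in Set.Iic x, Real.exp (-t ^ 2 / 2)

/-- The inverse standard Gaussian cdf `Φ⁻¹`. -/
noncomputable def stdCDFInv (p : ℝ) : ℝ := sInf {x : ℝ | p ≤ stdCDF x}

/-- The non-asymptotic fundamental limit `λ*(n, α, ε | P1, P2)` for binary classification. -/
noncomputable def lamStar (α : ℝ) (n : ℕ) (ε : ℝ) (P1 P2 : X → ℝ) : ℝ :=
  sSup {lam : ℝ | 0 ≤ lam ∧ ∃ φ : BTest X α n,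
    (∀ Q1 Q2 : X → ℝ, IsDist Q1 → IsDist Q2 →
      beta1 φ Q1 Q2 ≤ Real.exp (-((n : ℝ) * lam))) ∧
    beta2 φ P1 P2 ≤ ε}

/-- Rényi divergence of order `γ`. -/
noncomputable def renyi (γ : ℝ) (P1 P2 : X → ℝ) : ℝ :=
  (1 / (γ - 1)) * Real.log (∑ x, P1 x ^ γ * P2 x ^ (1 - γ))

/-- The fundamental limit `τ*(n, α, ε | φ_n^Gut, P1, P2)` in the dual setting for Gutman's test. -/
noncomputable def tauStarGut (α : ℝ) (n : ℕ) (ε : ℝ) (P1 P2 : X → ℝ) : ℝ :=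
  sSup {τ : ℝ | 0 ≤ τ ∧ ∃ lam : ℝ, 0 ≤ lam ∧
    (∀ Q1 Q2 : X → ℝ, IsDist Q1 → IsDist Q2 →
      beta1 (gutman α lam n) Q1 Q2 ≤ ε) ∧
    beta2 (gutman α lam n) P1 P2 ≤ Real.exp (-((n : ℝ) * τ))}

/-- A two-sample homogeneity test: `true` means "declare H₂" (different distributions). -/
abbrev TTest (X : Type*) (α : ℝ) (n : ℕ) : Type _ :=
  (Fin (trainLen α n) → X) → (Fin n → X) → Bool

/-- False-alarm probability of a two-sample test. -/
noncomputable def betaFA {α : ℝ} {n : ℕ} (φ : TTest X α n) (P1 : X → ℝ) : ℝ :=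
  ∑ x : Fin (trainLen α n) → X, ∑ y : Fin n → X,
    if φ x y = true then seqProb P1 x * seqProb P1 y else 0

/-- Miss-detection probability of a two-sample test. -/
noncomputable def betaMD {α : ℝ} {n : ℕ} (φ : TTest X α n) (P1 P2 : X → ℝ) : ℝ :=
  ∑ x : Fin (trainLen α n) → X, ∑ y : Fin n → X,
    if φ x y = false then seqProb P1 x * seqProb P2 y else 0

/-- The fundamental limit `ξ*(n, α, ε | P1, P2)` for two-sample homogeneity testing. -/
noncomputable def xiStar (α : ℝ) (n : ℕ) (ε : ℝ) (P1 P2 : X → ℝ) : ℝ :=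
  sSup {lam : ℝ | 0 ≤ lam ∧ ∃ φ : TTest X α n,
    (∀ Q1 : X → ℝ, IsDist Q1 → betaFA φ Q1 ≤ Real.exp (-((n : ℝ) * lam))) ∧
    betaMD φ P1 P2 ≤ ε}

/-- An M-ary classification test with the rejection option: `some j` means "declare H_j",
`none` means "reject". -/
abbrev MTest (X : Type*) (M : ℕ) (α : ℝ) (n : ℕ) : Type _ :=
  (Fin M → Fin (trainLen α n) → X) → (Fin n → X) → Option (Fin M)

/-- Type-`j` error probability: probability of declaring some hypothesis other than
`H_j` or rejection, under `H_j`. -/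
noncomputable def betaM {M : ℕ} {α : ℝ} {n : ℕ} (ψ : MTest X M α n)
    (P : Fin M → X → ℝ) (j : Fin M) : ℝ :=
  ∑ xs : Fin M → Fin (trainLen α n) → X, ∑ y : Fin n → X,
    if ψ xs y ≠ some j ∧ ψ xs y ≠ none then
      (∏ i, seqProb (P i) (xs i)) * seqProb (P j) y else 0

/-- Type-`j` rejection probability: probability of rejecting under `H_j`. -/
noncomputable def zetaM {M : ℕ} {α : ℝ} {n : ℕ} (ψ : MTest X M α n)
    (P : Fin M → X → ℝ) (j : Fin M) : ℝ :=
  ∑ xs : Fin M → Fin (trainLen α n) → X, ∑ y : Fin n → X,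
    if ψ xs y = none then (∏ i, seqProb (P i) (xs i)) * seqProb (P j) y else 0

/-- The fundamental limit `λ*(n, α, ε | P)` for M-ary classification with rejection. -/
noncomputable def lamStarM (M : ℕ) (α : ℝ) (n : ℕ) (ε : Fin M → ℝ)
    (P : Fin M → X → ℝ) : ℝ :=
  sSup {lam : ℝ | 0 ≤ lam ∧ ∃ ψ : MTest X M α n,
    (∀ Q : Fin M → X → ℝ, (∀ i, IsDist (Q i)) → ∀ j,
      betaM ψ Q j ≤ Real.exp (-((n : ℝ) * lam))) ∧
    (∀ j, zetaM ψ P j ≤ ε j)}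

open Classical in
/-- Gutman's M-ary test with rejection and threshold `lam`. -/
noncomputable def gutmanM (M : ℕ) [NeZero M] (α lam : ℝ) (n : ℕ) : MTest X M α n :=
  fun xs y =>
    if ∃ i k : Fin M, i ≠ k ∧ GJS (empDist (xs i)) (empDist y) α ≤ lam ∧
        GJS (empDist (xs k)) (empDist y) α ≤ lam then none
    else if h : ∃ j : Fin M, GJS (empDist (xs j)) (empDist y) α ≤ lam then some h.choose
    else some 0

/-- The fundamental limit `τ*(n, α, ε | Ψ_n^Gut, P)` in the dual setting for
Gutman's M-ary test. -/
noncomputable def tauStarGutM (M : ℕ) [NeZero M] (α : ℝ) (n : ℕ) (ε : ℝ)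
    (P : Fin M → X → ℝ) : ℝ :=
  sSup {τ : ℝ | 0 ≤ τ ∧ ∃ lam : ℝ, 0 ≤ lam ∧
    (∀ Q : Fin M → X → ℝ, (∀ i, IsDist (Q i)) → ∀ j,
      betaM (gutmanM M α lam n) Q j ≤ ε) ∧
    (∀ j, zetaM (gutmanM M α lam n) P j ≤ Real.exp (-((n : ℝ) * τ)))}

/-- Generalized divergence of three distributions
`D_γ(P1,P2,P3) = (γ-1)⁻¹ log Σ_x P1(x)^{1-γ} P2(x)^{γ/2} P3(x)^{γ/2}`. -/
noncomputable def genDiv (γ : ℝ) (P1 P2 P3 : X → ℝ) : ℝ :=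
  (1 / (γ - 1)) * Real.log (∑ x, P1 x ^ (1 - γ) * P2 x ^ (γ / 2) * P3 x ^ (γ / 2))

/-- A binary classification test with the rejection option: `some 0` means "declare H₁",
`some 1` means "declare H₂", `none` means "reject". -/
abbrev RTest (X : Type*) (α : ℝ) (n : ℕ) : Type _ :=
  (Fin (trainLen α n) → X) → (Fin (trainLen α n) → X) → (Fin n → X) → Option (Fin 2)

/-- Type-1 error probability of a rejection test: declare `H₂` under `H₁`. -/
noncomputable def beta1R {α : ℝ} {n : ℕ} (ψ : RTest X α n) (P1 P2 : X → ℝ) : ℝ :=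
  ∑ x1 : Fin (trainLen α n) → X, ∑ x2 : Fin (trainLen α n) → X, ∑ y : Fin n → X,
    if ψ x1 x2 y = some 1 then seqProb P1 x1 * seqProb P2 x2 * seqProb P1 y else 0

/-- Type-2 error probability of a rejection test: declare `H₁` under `H₂`. -/
noncomputable def beta2R {α : ℝ} {n : ℕ} (ψ : RTest X α n) (P1 P2 : X → ℝ) : ℝ :=
  ∑ x1 : Fin (trainLen α n) → X, ∑ x2 : Fin (trainLen α n) → X, ∑ y : Fin n → X,
    if ψ x1 x2 y = some 0 then seqProb P1 x1 * seqProb P2 x2 * seqProb P2 y else 0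

open Classical in
/-- Type-`j` rejection probability of a binary rejection test. -/
noncomputable def zetaR {α : ℝ} {n : ℕ} (ψ : RTest X α n) (P1 P2 : X → ℝ) (j : Fin 2) : ℝ :=
  ∑ x1 : Fin (trainLen α n) → X, ∑ x2 : Fin (trainLen α n) → X, ∑ y : Fin n → X,
    if ψ x1 x2 y = none then
      seqProb P1 x1 * seqProb P2 x2 * seqProb (if j = 0 then P1 else P2) y else 0

/-- A binary test is type-based if it depends on the data only through the
triple of empirical distributions. -/
def TypeBasedB {α : ℝ} {n : ℕ} (φ : BTest X α n) : Prop :=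
  ∀ x1 x1' x2 x2' : Fin (trainLen α n) → X, ∀ y y' : Fin n → X,
    empDist x1 = empDist x1' → empDist x2 = empDist x2' → empDist y = empDist y' →
      φ x1 x2 y = φ x1' x2' y'

/-- An M-ary test is type-based if it depends on the data only through the
tuple of empirical distributions. -/
def TypeBasedM {M : ℕ} {α : ℝ} {n : ℕ} (ψ : MTest X M α n) : Prop :=
  ∀ xs xs' : Fin M → Fin (trainLen α n) → X, ∀ y y' : Fin n → X,
    (∀ i, empDist (xs i) = empDist (xs' i)) → empDist y = empDist y' →
      ψ xs y = ψ xs' y'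

open Classical in
/-- Probability of an event under hypothesis `H₂` in the binary setup. -/
noncomputable def prH2E (α : ℝ) (n : ℕ) (P1 P2 : X → ℝ)
    (E : (Fin (trainLen α n) → X) → (Fin (trainLen α n) → X) → (Fin n → X) → Prop) : ℝ :=
  ∑ x1 : Fin (trainLen α n) → X, ∑ x2 : Fin (trainLen α n) → X, ∑ y : Fin n → X,
    if E x1 x2 y then seqProb P1 x1 * seqProb P2 x2 * seqProb P2 y else 0

open Classical in
/-- Probability of an event under hypothesis `H_j` in the M-ary setup. -/
noncomputable def prHjM (M : ℕ) (α : ℝ) (n : ℕ) (P : Fin M → X → ℝ) (j : Fin M)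
    (E : (Fin M → Fin (trainLen α n) → X) → (Fin n → X) → Prop) : ℝ :=
  ∑ xs : Fin M → Fin (trainLen α n) → X, ∑ y : Fin n → X,
    if E xs y then (∏ i, seqProb (P i) (xs i)) * seqProb (P j) y else 0

/-- `η_n(α) = |X| log(n+1)/n + 2|X| log(1+αn)/(αn)`. -/
noncomputable def etaN (X : Type*) [Fintype X] (α : ℝ) (n : ℕ) : ℝ :=
  (Fintype.card X : ℝ) * Real.log ((n : ℝ) + 1) / n +
    2 * (Fintype.card X : ℝ) * Real.log (1 + α * n) / (α * n)

/-- `η_{n,M} = M |X| log(nα+1)/(nα) + |X| log(n+1)/n`. -/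
noncomputable def etaNM (X : Type*) [Fintype X] (M : ℕ) (α : ℝ) (n : ℕ) : ℝ :=
  (M : ℝ) * (Fintype.card X : ℝ) * Real.log ((n : ℝ) * α + 1) / ((n : ℝ) * α) +
    (Fintype.card X : ℝ) * Real.log ((n : ℝ) + 1) / n

/-- `Q` is an `m`-type: the empirical distribution of some sequence of length `m`. -/
def IsTypeDist (m : ℕ) (Q : X → ℝ) : Prop := ∃ x : Fin m → X, empDist x = Q

/-- The type-restricted exponent function `F_n`. -/
noncomputable def Fn (n : ℕ) (P1 P2 : X → ℝ) (α lam : ℝ) : ℝ :=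
  sInf {v : ℝ | ∃ Q1 Q2 : X → ℝ, IsTypeDist (trainLen α n) Q1 ∧ IsTypeDist n Q2 ∧
    GJS Q1 Q2 α ≤ lam ∧ v = α * klDivR Q1 P1 + klDivR Q2 P2}

/-- The second smallest value of a finite family of reals:
`min_{i ≠ j} max (v i) (v j)`. -/
noncomputable def secondMin {M : ℕ} (v : Fin M → ℝ) : ℝ :=
  sInf {t : ℝ | ∃ i j : Fin M, i ≠ j ∧ t = max (v i) (v j)}

/-- The tilted distribution `P^{(γ)}` with `γ = α/(1+α)`. -/
noncomputable def tilt (α : ℝ) (P1 P2 : X → ℝ) : X → ℝ :=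
  fun x => P1 x ^ (α / (1 + α)) * P2 x ^ (1 / (1 + α)) /
    ∑ a, P1 a ^ (α / (1 + α)) * P2 a ^ (1 / (1 + α))


set_option linter.all false
set_option linter.unusedSectionVars false
set_option linter.unusedVariables false


lemma sum_prod_all {ι A : Type*} [Fintype ι] [DecidableEq ι] [Fintype A] (w : ι → A → ℝ) :
    ∑ x : ι → A, ∏ l, w l (x l) = ∏ l, ∑ a, w l a := by
  classical
  rw [Finset.prod_univ_sum, Fintype.piFinset_univ]

lemma sum_prod_two {ι A : Type*} [Fintype ι] [DecidableEq ι] [Fintype A] (w : ι → A → ℝ)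
    (hw : ∀ i, ∑ a, w i a = 1) (i k : ι) (h : i ≠ k) (f g : A → ℝ) :
    ∑ x : ι → A, (∏ l, w l (x l)) * (f (x i) * g (x k))
      = (∑ a, w i a * f a) * (∑ a, w k a * g a) := by
  have h1 : ∀ x : ι → A, (∏ l, w l (x l)) * (f (x i) * g (x k)) =
      ∏ l, (w l (x l) * ((if l = i then f (x l) else 1) * (if l = k then g (x l) else 1))) := by
    intro x
    rw [Finset.prod_mul_distrib, Finset.prod_mul_distrib]
    simp
  simp_rw [h1]
  rw [sum_prod_all (fun l a => w l a * ((if l = i then f a else 1) * (if l = k then g a else 1)))]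
  rw [Finset.prod_eq_mul i k h]
  · simp [h, h.symm]
  · rintro c - ⟨h1, h2⟩
    simp [h1, h2, hw]
  · simp
  · simp

lemma sum_prod_one {ι A : Type*} [Fintype ι] [DecidableEq ι] [Fintype A] (w : ι → A → ℝ)
    (hw : ∀ i, ∑ a, w i a = 1) (i : ι) (f : A → ℝ) :
    ∑ x : ι → A, (∏ l, w l (x l)) * f (x i) = ∑ a, w i a * f a := by
  have h1 : ∀ x : ι → A, (∏ l, w l (x l)) * f (x i) =
      ∏ l, (w l (x l) * (if l = i then f (x l) else 1)) := by
    intro x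
    rw [Finset.prod_mul_distrib]
    simp
  simp_rw [h1]
  rw [sum_prod_all (fun l a => w l a * (if l = i then f a else 1))]
  rw [Finset.prod_eq_single i]
  · simp
  · rintro c - h1
    simp [h1, hw]
  · simp

lemma seqProb_nonneg {Q : X → ℝ} (hQ : IsDist Q) {m : ℕ} (x : Fin m → X) : 0 ≤ seqProb Q x :=
  Finset.prod_nonneg fun i _ => hQ.1 _

lemma seqProb_sum {Q : X → ℝ} (hQ : IsDist Q) (m : ℕ) : ∑ x : Fin m → X, seqProb Q x = 1 := by
  unfold seqProb
  rw [sum_prod_all (fun _ : Fin m => Q)]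
  simp [hQ.2]

lemma empDist_eq {m : ℕ} (x : Fin m → X) (a : X) :
    (m : ℝ) * empDist x a = ∑ t, (if x t = a then (1 : ℝ) else 0) := by
  unfold empDist
  rcases Nat.eq_zero_or_pos m with rfl | hm
  · simp
  · have : (m : ℝ) ≠ 0 := by positivity
    rw [mul_div_cancel₀ _ this]
    simp

lemma sum_count {m : ℕ} (x : Fin m → X) (c : X → ℝ) :
    ∑ t, c (x t) = m * ∑ a, empDist x a * c a := by
  rw [Finset.mul_sum]
  simp_rw [← mul_assoc, empDist_eq, Finset.sum_mul]
  rw [Finset.sum_comm]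
  simp

lemma empDist_isDist {m : ℕ} (hm : 0 < m) (x : Fin m → X) : IsDist (empDist x) := by
  refine ⟨fun a => by unfold empDist; positivity, ?_⟩
  have := sum_count x (fun _ => 1)
  have hm' : (m : ℝ) ≠ 0 := by positivity
  simp only [Finset.sum_const, Finset.card_univ, Fintype.card_fin, nsmul_eq_mul, mul_one] at this
  exact (mul_left_cancel₀ hm' (by rw [← this, mul_one])).symm

lemma var_bound {Q : X → ℝ} (hQ : IsDist Q) {m : ℕ} (hm : 0 < m) (a : X) :
    ∑ x : Fin m → X, seqProb Q x * (empDist x a - Q a) ^ 2 ≤ 1 / m := by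
  set g : X → ℝ := fun b => (if b = a then 1 else 0) - Q a with hg
  have hg0 : ∑ b, Q b * g b = 0 := by
    simp [hg, mul_sub, ← Finset.sum_mul, hQ.2]
  have hQa : Q a ≤ 1 := by
    rw [← hQ.2]; exact Finset.single_le_sum (fun i _ => hQ.1 i) (Finset.mem_univ a)
  have hg1 : ∑ b, Q b * (g b) ^ 2 ≤ 1 := by
    rw [← hQ.2]
    refine Finset.sum_le_sum fun b _ => ?_
    have h0 := hQ.1 a
    have : (g b) ^ 2 ≤ 1 := by
      simp only [hg]; split_ifs <;> nlinarith
    nlinarith [hQ.1 b]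
  have hm' : (0 : ℝ) < m := by exact_mod_cast hm
  have key : ∀ x : Fin m → X, (empDist x a - Q a) ^ 2 = (1 / m ^ 2) * ∑ s, ∑ t, g (x s) * g (x t) := by
    intro x
    have : ∑ s, g (x s) = m * (empDist x a - Q a) := by
      simp only [hg, Finset.sum_sub_distrib, ← empDist_eq]
      simp [mul_sub]
    rw [← Finset.sum_mul_sum, this]
    field_simp
  simp_rw [key]
  have e : ∑ x : Fin m → X, seqProb Q x * (1 / (m : ℝ) ^ 2 * ∑ s, ∑ t, g (x s) * g (x t))
      = (1 / (m : ℝ) ^ 2) * ∑ s : Fin m, ∑ t : Fin m, ∑ x : Fin m → X, seqProb Q x * (g (x s) * g (x t)) := by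
    simp_rw [Finset.mul_sum]
    rw [Finset.sum_comm]
    refine Finset.sum_congr rfl fun s _ => ?_
    rw [Finset.sum_comm]
    refine Finset.sum_congr rfl fun t _ => Finset.sum_congr rfl fun x _ => by ring
  rw [e]
  have e2 : ∀ s t : Fin m, ∑ x : Fin m → X, seqProb Q x * (g (x s) * g (x t)) ≤ if s = t then 1 else 0 := by
    intro s t
    unfold seqProb
    split_ifs with h
    · subst h
      rw [sum_prod_one (fun _ : Fin m => Q) (fun _ => hQ.2) s (fun b => g b * g b)]
      simpa [sq] using hg1
    · rw [sum_prod_two (fun _ : Fin m => Q) (fun _ => hQ.2) s t h g g, hg0]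
      simp
  calc _ ≤ (1 / (m : ℝ) ^ 2) * ∑ s : Fin m, ∑ t : Fin m, (if s = t then (1 : ℝ) else 0) := by
        gcongr with s _ t _
        exact e2 s t
    _ = 1 / m := by
        simp; field_simp

/-- typical sequences -/
def Typ (Q : X → ℝ) (η : ℝ) {m : ℕ} (x : Fin m → X) : Prop := ∀ a, |empDist x a - Q a| ≤ η

open Classical in
lemma typ_bound {Q : X → ℝ} (hQ : IsDist Q) {m : ℕ} (hm : 0 < m) {η : ℝ} (hη : 0 < η) :
    ∑ x : Fin m → X, seqProb Q x * (if Typ Q η x then 0 else 1) ≤ Fintype.card X / (m * η ^ 2) := by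
  have hm' : (0 : ℝ) < m := by exact_mod_cast hm
  have h1 : ∀ x : Fin m → X, seqProb Q x * (if Typ Q η x then (0 : ℝ) else 1) ≤
      ∑ a, (1 / η ^ 2) * (seqProb Q x * (empDist x a - Q a) ^ 2) := by
    intro x
    have hp := seqProb_nonneg hQ x
    split_ifs with h
    · rw [mul_zero]; positivity
    · unfold Typ at h
      push Not at h
      obtain ⟨a, ha⟩ := h
      refine le_trans ?_ (Finset.single_le_sum (f := fun a => (1 / η ^ 2) * (seqProb Q x * (empDist x a - Q a) ^ 2)) (fun a _ => by positivity) (Finset.mem_univ a))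
      have : η ^ 2 ≤ (empDist x a - Q a) ^ 2 := by
        rw [← sq_abs (empDist x a - Q a)]; gcongr
      have h3 : 1 ≤ (1 / η ^ 2) * (empDist x a - Q a) ^ 2 := by
        rw [one_div_mul_eq_div, one_le_div (by positivity)]; exact this
      calc seqProb Q x * 1 ≤ seqProb Q x * ((1 / η ^ 2) * (empDist x a - Q a) ^ 2) := by gcongr
        _ = _ := by ring
  refine (Finset.sum_le_sum fun x _ => h1 x).trans ?_
  rw [Finset.sum_comm]
  simp_rw [← Finset.mul_sum]
  calc _ ≤ (1 / η ^ 2) * ∑ a : X, (1 / m : ℝ) := by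
        gcongr with a _
        exact var_bound hQ hm a
    _ = _ := by simp; field_simp

lemma klDivR_ge {P Q : X → ℝ} (hP : IsDist P) (hQ : IsDist Q) (hac : ∀ a, Q a = 0 → P a = 0) (a : X) :
    (P a - Q a) ^ 2 ≤ 4 * klDivR P Q := by
  have h1 : ∀ x, (√(P x) - √(Q x)) ^ 2 ≤ P x * Real.log (P x / Q x) - P x + Q x := by
    intro x
    rcases (hP.1 x).eq_or_lt with h0 | h0
    · rw [← h0]; simp [Real.sq_sqrt (hQ.1 x)]
    have hq : 0 < Q x := lt_of_le_of_ne (hQ.1 x) fun h => h0.ne' (hac x h.symm)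
    have hl : Real.log (√(Q x) / √(P x)) ≤ √(Q x) / √(P x) - 1 := Real.log_le_sub_one_of_pos (by positivity)
    have hl2 : Real.log (P x / Q x) = -2 * Real.log (√(Q x) / √(P x)) := by
      rw [Real.log_div (by positivity) (by positivity), Real.log_div (by positivity) (by positivity),
        Real.log_sqrt (by positivity), Real.log_sqrt (by positivity)]; ring
    have h3 : P x * Real.log (P x / Q x) ≥ 2 * P x - 2 * √(P x) * √(Q x) := by
      rw [hl2]
      have : P x * (√(Q x) / √(P x)) = √(P x) * √(Q x) := by
        have hs : √(P x) ≠ 0 := by positivity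
        field_simp
        rw [Real.sq_sqrt h0.le]
      nlinarith
    nlinarith [Real.sq_sqrt h0.le, Real.sq_sqrt hq.le]
  have h2 : ∑ x, (√(P x) - √(Q x)) ^ 2 ≤ klDivR P Q := by
    refine (Finset.sum_le_sum fun x _ => h1 x).trans ?_
    rw [Finset.sum_add_distrib, Finset.sum_sub_distrib, hP.2, hQ.2]
    unfold klDivR; linarith
  have h3 := (Finset.single_le_sum (f := fun x => (√(P x) - √(Q x)) ^ 2) (fun x _ => sq_nonneg _) (Finset.mem_univ a)).trans h2
  have hb : ∀ {R : X → ℝ}, IsDist R → √(R a) ≤ 1 := by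
    intro R hR
    refine Real.sqrt_le_iff.2 ⟨zero_le_one, ?_⟩
    rw [one_pow, ← hR.2]; exact Finset.single_le_sum (fun i _ => hR.1 i) (Finset.mem_univ a)
  have e : (P a - Q a) ^ 2 = (√(P a) - √(Q a)) ^ 2 * (√(P a) + √(Q a)) ^ 2 := by
    conv_lhs => rw [← Real.sq_sqrt (hP.1 a), ← Real.sq_sqrt (hQ.1 a)]
    ring
  rw [e]
  have : (√(P a) + √(Q a)) ^ 2 ≤ 4 := by
    nlinarith [hb hP, hb hQ, Real.sqrt_nonneg (P a), Real.sqrt_nonneg (Q a)]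
  nlinarith [sq_nonneg (√(P a) - √(Q a))]

lemma mix_isDist {P Q : X → ℝ} (hP : IsDist P) (hQ : IsDist Q) {α : ℝ} (hα : 0 < α) :
    IsDist (mix P Q α) := by
  refine ⟨fun a => ?_, ?_⟩
  · have := hP.1 a
    have := hQ.1 a
    unfold mix; positivity
  · unfold mix
    rw [← Finset.sum_div, Finset.sum_add_distrib, ← Finset.mul_sum, hP.2, hQ.2]
    field_simp
    ring

lemma mix_zero {P Q : X → ℝ} (hP : IsDist P) (hQ : IsDist Q) {α : ℝ} (hα : 0 < α) (a : X)
    (h : mix P Q α a = 0) : P a = 0 ∧ Q a = 0 := by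
  have h1 := hP.1 a
  have h2 := hQ.1 a
  unfold mix at h
  rw [div_eq_zero_iff] at h
  rcases h with h | h
  · have : 0 ≤ α * P a := by positivity
    refine ⟨?_, by linarith⟩
    have : α * P a = 0 := by linarith
    rcases mul_eq_zero.1 this with h | h
    · linarith
    · exact h
  · linarith

lemma GJS_lower {P Q : X → ℝ} (hP : IsDist P) (hQ : IsDist Q) {α η : ℝ} (hα : 0 < α) (hη : 0 < η)
    (h : GJS P Q α ≤ (α / (1 + α)) ^ 2 * η ^ 2 / 4) (a : X) : |P a - Q a| ≤ η := by
  have hm := mix_isDist hP hQ hα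
  have h1 := klDivR_ge hP hm (fun a h => (mix_zero hP hQ hα a h).1) a
  have h2 := klDivR_ge hQ hm (fun a h => (mix_zero hP hQ hα a h).2) a
  have h3 : 0 ≤ klDivR P (mix P Q α) := by nlinarith [sq_nonneg (P a - mix P Q α a)]
  have h4 : klDivR Q (mix P Q α) ≤ GJS P Q α := by
    unfold GJS; nlinarith [mul_nonneg hα.le h3]
  have e : Q a - mix P Q α a = (α / (1 + α)) * (Q a - P a) := by
    unfold mix; field_simp; ring
  rw [e, mul_pow] at h2
  have hp : 0 < (α / (1 + α)) ^ 2 := by positivity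
  have : (Q a - P a) ^ 2 ≤ η ^ 2 := by
    refine le_of_mul_le_mul_left (a := (α / (1 + α)) ^ 2) ?_ hp
    linarith
  rw [abs_sub_comm]
  exact abs_le_of_sq_le_sq this hη.le

lemma GJS_upper {P Q : X → ℝ} (hP : IsDist P) (hQ : IsDist Q) {α : ℝ} (hα : 0 < α) :
    GJS P Q α ≤ (1 + α) * ∑ a, |P a - Q a| := by
  unfold GJS klDivR
  rw [Finset.mul_sum, ← Finset.sum_add_distrib, Finset.mul_sum]
  refine Finset.sum_le_sum fun a _ => ?_
  have hm := (mix_isDist hP hQ hα).1 a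
  have h1 := hP.1 a
  have h2 := hQ.1 a
  rcases hm.eq_or_lt with h0 | h0
  · have := mix_zero hP hQ hα a h0.symm
    simp [this.1, this.2]
  have aux : ∀ p K : ℝ, 0 ≤ p → p ≤ K * mix P Q α a → p * Real.log (p / mix P Q α a) ≤ K * |p - mix P Q α a| := by
    intro p K hp hK
    rcases hp.eq_or_lt with h | h
    · rw [← h]
      rw [← h] at hK
      have : 0 ≤ K := by
        by_contra hc
        nlinarith
      simp; positivity
    have hl := Real.log_le_sub_one_of_pos (div_pos h h0)
    have hKK : p / mix P Q α a ≤ K := (div_le_iff₀ h0).2 hK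
    calc p * Real.log (p / mix P Q α a) ≤ p * (p / mix P Q α a - 1) := by gcongr
      _ = (p / mix P Q α a) * (p - mix P Q α a) := by field_simp
      _ ≤ (p / mix P Q α a) * |p - mix P Q α a| := by gcongr; exact le_abs_self _
      _ ≤ _ := by gcongr
  have em : (1 + α) * mix P Q α a = α * P a + Q a := by unfold mix; field_simp
  have a1 := aux (P a) ((1 + α) / α) h1 (by
    rw [div_mul_eq_mul_div, em, le_div_iff₀ hα]; nlinarith)
  have a2 := aux (Q a) (1 + α) h2 (by rw [em]; nlinarith)
  have e1 : P a - mix P Q α a = (P a - Q a) / (1 + α) := by unfold mix; field_simp; ring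
  have e2 : Q a - mix P Q α a = -(α * (P a - Q a) / (1 + α)) := by unfold mix; field_simp; ring
  rw [e1, abs_div, abs_of_pos (by linarith : 0 < 1 + α)] at a1
  rw [e2, abs_neg, abs_div, abs_mul, abs_of_pos hα, abs_of_pos (by linarith : 0 < 1 + α)] at a2
  have b1 : α * ((1 + α) / α * (|P a - Q a| / (1 + α))) = |P a - Q a| := by field_simp
  have b2 : (1 + α) * (α * |P a - Q a| / (1 + α)) = α * |P a - Q a| := by field_simp
  rw [b2] at a2
  have := mul_le_mul_of_nonneg_left a1 hα.le
  rw [b1] at this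
  linarith

lemma seqProb_exp {P : X → ℝ} (hs : FullSupport P) {m : ℕ} (x : Fin m → X) :
    seqProb P x = Real.exp (m * ∑ a, empDist x a * Real.log (P a)) := by
  rw [← sum_count x (fun a => Real.log (P a)), Real.exp_sum]
  exact Finset.prod_congr rfl fun t _ => (Real.exp_log (hs _)).symm

lemma trainLen_ge (α : ℝ) (n : ℕ) : α * n ≤ trainLen α n := Nat.le_ceil _

lemma trainLen_le {α : ℝ} (hα : 0 < α) (n : ℕ) : (trainLen α n : ℝ) ≤ α * n + 1 :=
  (Nat.ceil_lt_add_one (by positivity)).le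

lemma trainLen_pos {α : ℝ} (hα : 0 < α) {n : ℕ} (hn : 0 < n) : 0 < trainLen α n :=
  Nat.ceil_pos.2 (by positivity)

lemma lr_aux {α : ℝ} (hα : 0 < α) {n : ℕ} (hn : 0 < n) {η B : ℝ}
    (x : Fin (trainLen α n) → X) (y : Fin n → X) (h : ∀ a, |empDist x a - empDist y a| ≤ η)
    (c : X → ℝ) (hc : ∀ a, |c a| ≤ B) (hB : 0 ≤ B) :
    |(trainLen α n : ℝ) * ∑ a, empDist x a * c a - α * n * ∑ a, empDist y a * c a|
      ≤ B * (1 + α * Fintype.card X) * (n * η + 1) := by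
  have hx := empDist_isDist (trainLen_pos hα hn) x
  obtain ⟨a0⟩ : Nonempty X := ⟨y ⟨0, hn⟩⟩
  have hη : 0 ≤ η := (abs_nonneg _).trans (h a0)
  have e : (trainLen α n : ℝ) * ∑ a, empDist x a * c a - α * n * ∑ a, empDist y a * c a
      = (trainLen α n - α * n) * ∑ a, empDist x a * c a
        + α * n * ∑ a, (empDist x a - empDist y a) * c a := by
    simp_rw [sub_mul, Finset.sum_sub_distrib]; ring
  have h1 : |∑ a, empDist x a * c a| ≤ B := by
    refine (Finset.abs_sum_le_sum_abs _ _).trans ?_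
    calc ∑ a, |empDist x a * c a| ≤ ∑ a, empDist x a * B := by
          refine Finset.sum_le_sum fun a _ => ?_
          rw [abs_mul, abs_of_nonneg (hx.1 a)]
          exact mul_le_mul_of_nonneg_left (hc a) (hx.1 a)
      _ = B := by rw [← Finset.sum_mul, hx.2, one_mul]
  have h2 : |∑ a, (empDist x a - empDist y a) * c a| ≤ Fintype.card X * (η * B) := by
    refine (Finset.abs_sum_le_sum_abs _ _).trans ?_
    calc ∑ a, |(empDist x a - empDist y a) * c a| ≤ ∑ a : X, η * B := by
          refine Finset.sum_le_sum fun a _ => ?_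
          rw [abs_mul]
          exact mul_le_mul (h a) (hc a) (abs_nonneg _) hη
      _ = _ := by simp
  have h3 : |(trainLen α n : ℝ) - α * n| ≤ 1 := by
    rw [abs_le]; constructor <;> linarith [trainLen_ge α n, trainLen_le hα n]
  rw [e]
  refine (abs_add_le _ _).trans ?_
  rw [abs_mul, abs_mul, abs_of_nonneg (by positivity : 0 ≤ α * (n : ℝ))]
  calc _ ≤ 1 * B + α * n * (Fintype.card X * (η * B)) := by gcongr
    _ ≤ _ := by
      have : 0 ≤ B * (n * η) + B * α * Fintype.card X := by positivity
      nlinarith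

lemma LR {α : ℝ} (hα : 0 < α) {Pi Pk Pj : X → ℝ} (hi : FullSupport Pi) (hk : FullSupport Pk)
    (hj : FullSupport Pj) (hdj : IsDist Pj) :
    ∃ q : X → ℝ, IsDist q ∧ ∃ C : ℝ, 0 ≤ C ∧ ∀ n : ℕ, 0 < n → ∀ η : ℝ, 0 ≤ η →
      ∀ (x x' : Fin (trainLen α n) → X) (y : Fin n → X),
        (∀ a, |empDist x a - empDist y a| ≤ η) → (∀ a, |empDist x' a - empDist y a| ≤ η) →
        seqProb Pi x * seqProb Pk x' * seqProb Pj y ≤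
          Real.exp (-(n * genDiv (2 * α / (1 + 2 * α)) Pj Pi Pk) + C * (n * η + 1)) *
            (seqProb q x * seqProb q x' * seqProb q y) ∧
        Real.exp (-(n * genDiv (2 * α / (1 + 2 * α)) Pj Pi Pk) - C * (n * η + 1)) *
            (seqProb q x * seqProb q x' * seqProb q y) ≤
          seqProb Pi x * seqProb Pk x' * seqProb Pj y := by
  have hne : Nonempty X := by
    by_contra h
    rw [not_nonempty_iff] at h
    have := hdj.2
    simp at this
  set γ := 2 * α / (1 + 2 * α) with hγ
  set f : X → ℝ := fun x => Pj x ^ (1 - γ) * Pi x ^ (γ / 2) * Pk x ^ (γ / 2) with hf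
  have hfpos : ∀ x, 0 < f x := fun x =>
    mul_pos (mul_pos (Real.rpow_pos_of_pos (hj x) _) (Real.rpow_pos_of_pos (hi x) _))
      (Real.rpow_pos_of_pos (hk x) _)
  set S := ∑ x, f x with hS
  have hSpos : 0 < S := Finset.sum_pos (fun x _ => hfpos x) Finset.univ_nonempty
  set q : X → ℝ := fun x => f x / S with hq
  have hqpos : FullSupport q := fun x => div_pos (hfpos x) hSpos
  have hqd : IsDist q := ⟨fun x => (hqpos x).le, by
    simp only [hq]; rw [← Finset.sum_div, ← hS, div_self hSpos.ne']⟩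
  set D := genDiv γ Pj Pi Pk with hD
  have hDS : D = -((1 + 2 * α) * Real.log S) := by
    simp only [hD, genDiv, hS, hf]
    have : 1 / (γ - 1) = -(1 + 2 * α) := by
      have h1 : γ - 1 = -(1 / (1 + 2 * α)) := by rw [hγ]; field_simp; ring
      rw [h1]; field_simp
    rw [this]; ring
  set ci : X → ℝ := fun a => Real.log (Pi a) - Real.log (q a) with hci
  set ck : X → ℝ := fun a => Real.log (Pk a) - Real.log (q a) with hck
  set cj : X → ℝ := fun a => Real.log (Pj a) - Real.log (q a) with hcj
  have hsum : ∀ a, α * ci a + α * ck a + cj a = -D := by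
    intro a
    have : Real.log (q a) = (1 - γ) * Real.log (Pj a) + γ / 2 * Real.log (Pi a)
        + γ / 2 * Real.log (Pk a) - Real.log S := by
      simp only [hq]
      rw [Real.log_div (hfpos a).ne' hSpos.ne']
      simp only [hf]
      rw [Real.log_mul (mul_pos (Real.rpow_pos_of_pos (hj a) _) (Real.rpow_pos_of_pos (hi a) _)).ne'
        (Real.rpow_pos_of_pos (hk a) _).ne', Real.log_mul (Real.rpow_pos_of_pos (hj a) _).ne'
        (Real.rpow_pos_of_pos (hi a) _).ne', Real.log_rpow (hi a), Real.log_rpow (hj a),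
        Real.log_rpow (hk a)]
    simp only [hci, hck, hcj]
    rw [this, hDS, hγ]
    field_simp
    ring
  set B := ∑ a, (|ci a| + |ck a|) with hB
  have hB0 : 0 ≤ B := by positivity
  have hBi : ∀ a, |ci a| ≤ B := fun a =>
    (le_add_of_nonneg_right (abs_nonneg _)).trans (Finset.single_le_sum
      (f := fun a => |ci a| + |ck a|) (fun a _ => by positivity) (Finset.mem_univ a))
  have hBk : ∀ a, |ck a| ≤ B := fun a =>
    (le_add_of_nonneg_left (abs_nonneg _)).trans (Finset.single_le_sum
      (f := fun a => |ci a| + |ck a|) (fun a _ => by positivity) (Finset.mem_univ a))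
  refine ⟨q, hqd, 2 * (B * (1 + α * Fintype.card X)), by positivity, ?_⟩
  intro n hn η hη x x' y hx hx'
  have b1 := lr_aux hα hn x y hx ci hBi hB0
  have b2 := lr_aux hα hn x' y hx' ck hBk hB0
  have hy := empDist_isDist hn y
  have e1 : α * n * ∑ a, empDist y a * ci a + α * n * ∑ a, empDist y a * ck a
      + n * ∑ a, empDist y a * cj a = -(n * D) := by
    have : ∑ a, empDist y a * (α * ci a + α * ck a + cj a) = -D := by
      simp_rw [hsum]
      rw [← Finset.sum_mul, hy.2, one_mul]
    rw [← mul_neg, ← this]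
    simp only [Finset.mul_sum, ← Finset.sum_add_distrib]
    exact Finset.sum_congr rfl fun a _ => by ring
  have es : ∀ (P : X → ℝ) (m : ℕ) (z : Fin m → X),
      (m : ℝ) * ∑ a, empDist z a * (Real.log (P a) - Real.log (q a)) =
      m * ∑ a, empDist z a * Real.log (P a) - m * ∑ a, empDist z a * Real.log (q a) := by
    intro P m z
    simp_rw [mul_sub, Finset.sum_sub_distrib]
    ring
  rw [seqProb_exp hi, seqProb_exp hk, seqProb_exp hj, seqProb_exp hqpos, seqProb_exp hqpos,
    seqProb_exp hqpos]
  have s1 := es Pi _ x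
  have s2 := es Pk _ x'
  have s3 := es Pj _ y
  simp only [hci] at b1 e1
  simp only [hck] at b2 e1
  simp only [hcj] at e1
  rw [s1, abs_le] at b1
  rw [s2, abs_le] at b2
  rw [s3] at e1
  simp only [← Real.exp_add]
  constructor <;> · rw [Real.exp_le_exp]; linarith

open Classical in
/-- indicator -/
noncomputable def ind (p : Prop) : ℝ := if p then 1 else 0

lemma ind_nonneg (p : Prop) : 0 ≤ ind p := by unfold ind; split_ifs <;> norm_num
lemma ind_le_one (p : Prop) : ind p ≤ 1 := by unfold ind; split_ifs <;> norm_num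
lemma ind_true {p : Prop} (h : p) : ind p = 1 := by simp [ind, h]
lemma ind_false {p : Prop} (h : ¬ p) : ind p = 0 := by simp [ind, h]

/-- acceptance event -/
def Acc (α lam : ℝ) {n : ℕ} (x : Fin (trainLen α n) → X) (y : Fin n → X) : Prop :=
  GJS (empDist x) (empDist y) α ≤ lam

lemma gut_none {M : ℕ} [NeZero M] {α lam : ℝ} {n : ℕ} (xs : Fin M → Fin (trainLen α n) → X)
    (y : Fin n → X) : gutmanM M α lam n xs y = none ↔
      ∃ i k : Fin M, i ≠ k ∧ Acc α lam (xs i) y ∧ Acc α lam (xs k) y := by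
  unfold gutmanM Acc
  split_ifs with h1 h2
  · simp only [true_iff]; exact h1
  · simp only [reduceCtorEq, false_iff]; exact h1
  · simp only [reduceCtorEq, false_iff]; exact h1

lemma gut_err_imp {M : ℕ} [NeZero M] {α lam : ℝ} {n : ℕ} (xs : Fin M → Fin (trainLen α n) → X)
    (y : Fin n → X) (j : Fin M) (h : gutmanM M α lam n xs y ≠ some j ∧ gutmanM M α lam n xs y ≠ none) :
    ¬ Acc α lam (xs j) y := by
  intro hA
  obtain ⟨h1, h2⟩ := h
  unfold Acc at hA
  unfold gutmanM at h1 h2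
  split_ifs at h1 h2 with h3 h4
  · exact h2 rfl
  · apply h1
    by_contra hne
    exact h3 ⟨h4.choose, j, fun e => hne (by rw [e]), h4.choose_spec, hA⟩
  · exact h4 ⟨j, hA⟩

lemma gut_err_of {M : ℕ} [NeZero M] {α lam : ℝ} {n : ℕ} (xs : Fin M → Fin (trainLen α n) → X)
    (y : Fin n → X) (j : Fin M) (hj : j ≠ 0) (h : ∀ i, ¬ Acc α lam (xs i) y) :
    gutmanM M α lam n xs y ≠ some j ∧ gutmanM M α lam n xs y ≠ none := by
  unfold Acc at h
  unfold gutmanM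
  split_ifs with h3 h4
  · obtain ⟨i, k, _, h5, _⟩ := h3
    exact absurd h5 (h i)
  · obtain ⟨i, h5⟩ := h4
    exact absurd h5 (h i)
  · simp [hj.symm]

/-- mass of an event -/
noncomputable def mass (Q : X → ℝ) {m : ℕ} (E : (Fin m → X) → Prop) : ℝ :=
  ∑ x, seqProb Q x * ind (E x)

lemma mass_nonneg {Q : X → ℝ} (hQ : IsDist Q) {m : ℕ} (E : (Fin m → X) → Prop) : 0 ≤ mass Q E :=
  Finset.sum_nonneg fun x _ => mul_nonneg (seqProb_nonneg hQ x) (ind_nonneg _)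

lemma mass_le_one {Q : X → ℝ} (hQ : IsDist Q) {m : ℕ} (E : (Fin m → X) → Prop) : mass Q E ≤ 1 := by
  rw [← seqProb_sum hQ m]
  exact Finset.sum_le_sum fun x _ => mul_le_of_le_one_right (seqProb_nonneg hQ x) (ind_le_one _)

lemma zeta_upper {M : ℕ} [NeZero M] {α lam : ℝ} {n : ℕ} {P : Fin M → X → ℝ}
    (hP : ∀ i, IsDist (P i)) (j : Fin M) :
    zetaM (gutmanM M α lam n) P j ≤ ∑ i, ∑ k, ind (i ≠ k) *
      ∑ y : Fin n → X, seqProb (P j) y *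
        (mass (P i) (fun x => Acc α lam x y) * mass (P k) (fun x => Acc α lam x y)) := by
  have hw : ∀ i : Fin M, ∑ x : Fin (trainLen α n) → X, seqProb (P i) x = 1 := fun i =>
    seqProb_sum (hP i) _
  have h1 : ∀ i k : Fin M, ind (i ≠ k) * ∑ y : Fin n → X, seqProb (P j) y *
        (mass (P i) (fun x => Acc α lam x y) * mass (P k) (fun x => Acc α lam x y)) =
      ∑ xs : Fin M → Fin (trainLen α n) → X, ∑ y : Fin n → X,
        ((∏ i, seqProb (P i) (xs i)) * seqProb (P j) y) *
          (ind (i ≠ k) * (ind (Acc α lam (xs i) y) * ind (Acc α lam (xs k) y))) := by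
    intro i k
    by_cases h : i = k
    · simp [ind_false (not_not.2 h)]
    rw [ind_true h, one_mul, Finset.sum_comm]
    refine Finset.sum_congr rfl fun y _ => ?_
    unfold mass
    rw [← sum_prod_two (fun i x => seqProb (P i) x) hw i k h, Finset.mul_sum]
    refine Finset.sum_congr rfl fun xs _ => ?_
    ring
  simp_rw [h1]
  simp_rw [Finset.sum_comm (s := (Finset.univ : Finset (Fin M))) (t := (Finset.univ : Finset (Fin M → Fin (trainLen α n) → X)))]
  unfold zetaM
  refine Finset.sum_le_sum fun xs _ => ?_
  simp_rw [Finset.sum_comm (s := (Finset.univ : Finset (Fin M))) (t := (Finset.univ : Finset (Fin n → X)))]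
  refine Finset.sum_le_sum fun y _ => ?_
  simp_rw [← Finset.mul_sum]
  have hp : 0 ≤ (∏ i, seqProb (P i) (xs i)) * seqProb (P j) y :=
    mul_nonneg (Finset.prod_nonneg fun i _ => seqProb_nonneg (hP i) _) (seqProb_nonneg (hP j) _)
  have hnn : ∀ i k, 0 ≤ ind (i ≠ k) * (ind (Acc α lam (xs i) y) * ind (Acc α lam (xs k) y)) :=
    fun i k => mul_nonneg (ind_nonneg _) (mul_nonneg (ind_nonneg _) (ind_nonneg _))
  split_ifs with h
  · rw [gut_none] at h
    obtain ⟨i, k, hik, hi, hk⟩ := h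
    refine le_mul_of_one_le_right hp ?_
    refine le_trans ?_ (Finset.single_le_sum (fun i _ => Finset.sum_nonneg fun k _ => hnn i k) (Finset.mem_univ i))
    refine le_trans ?_ (Finset.single_le_sum (fun k _ => hnn i k) (Finset.mem_univ k))
    rw [ind_true hik, ind_true hi, ind_true hk]; norm_num
  · exact mul_nonneg hp (Finset.sum_nonneg fun i _ => Finset.sum_nonneg fun k _ => hnn i k)

lemma zeta_lower {M : ℕ} [NeZero M] {α lam : ℝ} {n : ℕ} {P : Fin M → X → ℝ}
    (hP : ∀ i, IsDist (P i)) (j i k : Fin M) (h : i ≠ k) :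
    ∑ y : Fin n → X, seqProb (P j) y *
        (mass (P i) (fun x => Acc α lam x y) * mass (P k) (fun x => Acc α lam x y))
      ≤ zetaM (gutmanM M α lam n) P j := by
  have hw : ∀ i : Fin M, ∑ x : Fin (trainLen α n) → X, seqProb (P i) x = 1 := fun i =>
    seqProb_sum (hP i) _
  unfold zetaM
  rw [Finset.sum_comm]
  refine Finset.sum_le_sum fun y _ => ?_
  unfold mass
  rw [← sum_prod_two (fun i x => seqProb (P i) x) hw i k h, Finset.mul_sum]
  refine Finset.sum_le_sum fun xs _ => ?_
  have hp : 0 ≤ (∏ i, seqProb (P i) (xs i)) * seqProb (P j) y :=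
    mul_nonneg (Finset.prod_nonneg fun i _ => seqProb_nonneg (hP i) _) (seqProb_nonneg (hP j) _)
  split_ifs with h2
  · have := mul_le_one₀ (ind_le_one (Acc α lam (xs i) y)) (ind_nonneg _) (ind_le_one (Acc α lam (xs k) y))
    calc _ = ((∏ i, seqProb (P i) (xs i)) * seqProb (P j) y) *
          (ind (Acc α lam (xs i) y) * ind (Acc α lam (xs k) y)) := by ring
      _ ≤ _ := mul_le_of_le_one_right hp this
  · rw [gut_none] at h2
    push Not at h2
    by_cases ha : Acc α lam (xs i) y
    · rw [ind_false (h2 i k h ha)]; simp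
    · rw [ind_false ha]; simp

lemma beta_upper {M : ℕ} [NeZero M] {α lam : ℝ} {n : ℕ} {P : Fin M → X → ℝ}
    (hP : ∀ i, IsDist (P i)) (j : Fin M) :
    betaM (gutmanM M α lam n) P j ≤
      ∑ y : Fin n → X, seqProb (P j) y * mass (P j) (fun x => ¬ Acc α lam x y) := by
  have hw : ∀ i : Fin M, ∑ x : Fin (trainLen α n) → X, seqProb (P i) x = 1 := fun i =>
    seqProb_sum (hP i) _
  unfold betaM
  rw [Finset.sum_comm]
  refine Finset.sum_le_sum fun y _ => ?_
  unfold mass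
  rw [← sum_prod_one (fun i x => seqProb (P i) x) hw j, Finset.mul_sum]
  refine Finset.sum_le_sum fun xs _ => ?_
  have hp : 0 ≤ (∏ i, seqProb (P i) (xs i)) :=
    Finset.prod_nonneg fun i _ => seqProb_nonneg (hP i) _
  split_ifs with h2
  · rw [ind_true (gut_err_imp xs y j h2)]
    linarith
  · exact mul_nonneg (seqProb_nonneg (hP j) _) (mul_nonneg hp (ind_nonneg _))

lemma beta_lower {M : ℕ} [NeZero M] {α lam : ℝ} {n : ℕ} {q : X → ℝ}
    (hq : IsDist q) (j : Fin M) (hj : j ≠ 0) :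
    1 - M * ∑ y : Fin n → X, seqProb q y * mass q (fun x : Fin (trainLen α n) → X => Acc α lam x y)
      ≤ betaM (gutmanM M α lam n) (fun _ => q) j := by
  have h0 : ∑ y : Fin n → X, seqProb q y * (1 - mass q (fun x : Fin (trainLen α n) → X => Acc α lam x y)) ^ M
      ≤ betaM (gutmanM M α lam n) (fun _ => q) j := by
    unfold betaM
    rw [Finset.sum_comm]
    refine Finset.sum_le_sum fun y _ => ?_
    have e : (1 - mass q (fun x : Fin (trainLen α n) → X => Acc α lam x y)) ^ M
        = ∑ xs : Fin M → Fin (trainLen α n) → X, ∏ i, (seqProb q (xs i) * (1 - ind (Acc α lam (xs i) y))) := by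
      rw [sum_prod_all (fun (_ : Fin M) x => seqProb q x * (1 - ind (Acc α lam x y)))]
      simp [mul_sub, Finset.sum_sub_distrib, seqProb_sum hq, mass]
    rw [e, Finset.mul_sum]
    refine Finset.sum_le_sum fun xs _ => ?_
    have hp : 0 ≤ (∏ i, seqProb q (xs i)) :=
      Finset.prod_nonneg fun i _ => seqProb_nonneg hq _
    rw [Finset.prod_mul_distrib]
    by_cases h : ∀ i, ¬ Acc α lam (xs i) y
    · rw [if_pos (gut_err_of xs y j hj h)]
      simp only [ind_false (h _)]
      simp [mul_comm]
    · push Not at h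
      obtain ⟨i, hi⟩ := h
      rw [Finset.prod_eq_zero (f := fun i => (1 - ind (Acc α lam (xs i) y))) (Finset.mem_univ i) (by simp [ind_true hi])]
      rw [mul_zero, mul_zero]
      split_ifs
      · exact mul_nonneg hp (seqProb_nonneg hq _)
      · exact le_rfl
  refine le_trans ?_ h0
  have : 1 - M * ∑ y : Fin n → X, seqProb q y * mass q (fun x : Fin (trainLen α n) → X => Acc α lam x y)
      = ∑ y : Fin n → X, seqProb q y * (1 - M * mass q (fun x : Fin (trainLen α n) → X => Acc α lam x y)) := by
    simp_rw [mul_sub, Finset.sum_sub_distrib, mul_one, seqProb_sum hq n, Finset.mul_sum]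
    congr 1
    exact Finset.sum_congr rfl fun y _ => by ring
  rw [this]
  refine Finset.sum_le_sum fun y _ => mul_le_mul_of_nonneg_left ?_ (seqProb_nonneg hq y)
  have hb := one_add_mul_le_pow (a := -mass q (fun x : Fin (trainLen α n) → X => Acc α lam x y))
    (by linarith [mass_le_one hq (fun x : Fin (trainLen α n) → X => Acc α lam x y)]) M
  rw [← sub_eq_add_neg] at hb
  linarith

lemma typ_mass {Q : X → ℝ} (hQ : IsDist Q) {m : ℕ} (hm : 0 < m) {η : ℝ} (hη : 0 < η) :
    mass Q (fun x : Fin m → X => ¬ Typ Q η x) ≤ Fintype.card X / (m * η ^ 2) := by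
  classical
  refine le_trans (le_of_eq ?_) (typ_bound hQ hm hη)
  unfold mass ind
  refine Finset.sum_congr rfl fun x _ => ?_
  by_cases h : Typ Q η x <;> simp [h]

lemma typ_mass_sum {Q : X → ℝ} (hQ : IsDist Q) {α : ℝ} (hα : 0 < α) {n : ℕ} (hn : 0 < n) {η : ℝ} (hη : 0 < η) :
    mass Q (fun x : Fin (trainLen α n) → X => ¬ Typ Q η x) + mass Q (fun x : Fin n → X => ¬ Typ Q η x)
      ≤ (Fintype.card X / η ^ 2 * (1 / α + 1)) / n := by
  have h1 := typ_mass hQ (trainLen_pos hα hn) hη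
  have h2 := typ_mass hQ hn hη
  have hn' : (0 : ℝ) < n := by exact_mod_cast hn
  have h3 : (Fintype.card X : ℝ) / (trainLen α n * η ^ 2) ≤ Fintype.card X / (α * n * η ^ 2) := by
    have := trainLen_ge α n
    gcongr
  calc _ ≤ (Fintype.card X : ℝ) / (α * n * η ^ 2) + Fintype.card X / (n * η ^ 2) := by linarith
    _ = _ := by field_simp

lemma acc_of_typ {Q : X → ℝ} {α lam η : ℝ} (hα : 0 < α) {n : ℕ} (hn : 0 < n)
    (hl : (1 + α) * (Fintype.card X * (2 * η)) ≤ lam)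
    (x : Fin (trainLen α n) → X) (y : Fin n → X) (hx : Typ Q η x) (hy : Typ Q η y) :
    Acc α lam x y := by
  refine (GJS_upper (empDist_isDist (trainLen_pos hα hn) x) (empDist_isDist hn y) hα).trans
    (le_trans ?_ hl)
  have : ∑ a, |empDist x a - empDist y a| ≤ ∑ a : X, 2 * η := by
    refine Finset.sum_le_sum fun a _ => ?_
    have h1 := abs_le.1 (hx a)
    have h2 := abs_le.1 (hy a)
    rw [abs_le]; constructor <;> linarith
  simp only [Finset.sum_const, Finset.card_univ, nsmul_eq_mul] at this
  gcongr

lemma beta_conc {M : ℕ} [NeZero M] {α lam η : ℝ} (hα : 0 < α) (hη : 0 < η) {n : ℕ} (hn : 0 < n)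
    (hl : (1 + α) * (Fintype.card X * (2 * η)) ≤ lam) {P : Fin M → X → ℝ}
    (hP : ∀ i, IsDist (P i)) (j : Fin M) :
    betaM (gutmanM M α lam n) P j ≤ (Fintype.card X / η ^ 2 * (1 / α + 1)) / n := by
  refine (beta_upper hP j).trans (le_trans ?_ (typ_mass_sum (hP j) hα hn hη))
  have h1 : ∀ y : Fin n → X, mass (P j) (fun x : Fin (trainLen α n) → X => ¬ Acc α lam x y) ≤
      mass (P j) (fun x : Fin (trainLen α n) → X => ¬ Typ (P j) η x) + ind (¬ Typ (P j) η y) := by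
    intro y
    by_cases hy : Typ (P j) η y
    · rw [ind_false (not_not.2 hy), add_zero]
      refine Finset.sum_le_sum fun x _ => mul_le_mul_of_nonneg_left ?_ (seqProb_nonneg (hP j) x)
      by_cases hx : Typ (P j) η x
      · rw [ind_false (not_not.2 (acc_of_typ hα hn hl x y hx hy))]; exact ind_nonneg _
      · rw [ind_true hx]; exact ind_le_one _
    · rw [ind_true hy]
      linarith [mass_le_one (hP j) (fun x : Fin (trainLen α n) → X => ¬ Acc α lam x y),
        mass_nonneg (hP j) (fun x : Fin (trainLen α n) → X => ¬ Typ (P j) η x)]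
  calc _ ≤ ∑ y : Fin n → X, seqProb (P j) y * (mass (P j) (fun x : Fin (trainLen α n) → X => ¬ Typ (P j) η x) + ind (¬ Typ (P j) η y)) :=
        Finset.sum_le_sum fun y _ => mul_le_mul_of_nonneg_left (h1 y) (seqProb_nonneg (hP j) y)
    _ = _ := by
        simp_rw [mul_add, Finset.sum_add_distrib]
        rw [← Finset.sum_mul, seqProb_sum (hP j), one_mul]
        rfl

/-- two-sided triple sum expansion -/
lemma triple {Pi Pk Pj : X → ℝ} {N n : ℕ} (E : (Fin N → X) → (Fin n → X) → Prop) :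
    ∑ y : Fin n → X, seqProb Pj y * (mass Pi (fun x : Fin N → X => E x y) * mass Pk (fun x : Fin N → X => E x y))
      = ∑ y : Fin n → X, ∑ x : Fin N → X, ∑ x' : Fin N → X,
        (seqProb Pi x * seqProb Pk x' * seqProb Pj y) * (ind (E x y) * ind (E x' y)) := by
  refine Finset.sum_congr rfl fun y _ => ?_
  unfold mass
  rw [Finset.sum_mul_sum, Finset.mul_sum]
  refine Finset.sum_congr rfl fun x _ => ?_
  rw [Finset.mul_sum]
  refine Finset.sum_congr rfl fun x' _ => ?_
  ring

lemma triple_le {Pi Pk Pj q : X → ℝ} {N n : ℕ} (E : (Fin N → X) → (Fin n → X) → Prop) (K : ℝ)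
    (h : ∀ x x' y, E x y → E x' y → seqProb Pi x * seqProb Pk x' * seqProb Pj y ≤
      K * (seqProb q x * seqProb q x' * seqProb q y)) :
    ∑ y : Fin n → X, seqProb Pj y * (mass Pi (fun x : Fin N → X => E x y) * mass Pk (fun x : Fin N → X => E x y))
    ≤ K * ∑ y : Fin n → X, seqProb q y * (mass q (fun x : Fin N → X => E x y) * mass q (fun x : Fin N → X => E x y)) := by
  rw [triple, triple]
  simp_rw [Finset.mul_sum]
  refine Finset.sum_le_sum fun y _ => Finset.sum_le_sum fun x _ => Finset.sum_le_sum fun x' _ => ?_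
  by_cases h1 : E x y
  · by_cases h2 : E x' y
    · rw [ind_true h1, ind_true h2]
      have := h x x' y h1 h2
      linarith
    · rw [ind_false h2]; simp
  · rw [ind_false h1]; simp

lemma triple_ge {Pi Pk Pj q : X → ℝ} {N n : ℕ} (E : (Fin N → X) → (Fin n → X) → Prop) (K : ℝ)
    (h : ∀ x x' y, E x y → E x' y →
      K * (seqProb q x * seqProb q x' * seqProb q y) ≤ seqProb Pi x * seqProb Pk x' * seqProb Pj y) :
    K * ∑ y : Fin n → X, seqProb q y * (mass q (fun x : Fin N → X => E x y) * mass q (fun x : Fin N → X => E x y)) ≤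
    ∑ y : Fin n → X, seqProb Pj y * (mass Pi (fun x : Fin N → X => E x y) * mass Pk (fun x : Fin N → X => E x y)) := by
  rw [triple, triple]
  simp_rw [Finset.mul_sum]
  refine Finset.sum_le_sum fun y _ => Finset.sum_le_sum fun x _ => Finset.sum_le_sum fun x' _ => ?_
  by_cases h1 : E x y
  · by_cases h2 : E x' y
    · rw [ind_true h1, ind_true h2]
      have := h x x' y h1 h2
      linarith
    · rw [ind_false h2]; simp
  · rw [ind_false h1]; simp

lemma mass_mono {Q : X → ℝ} (hQ : IsDist Q) {m : ℕ} {E F : (Fin m → X) → Prop} (h : ∀ x, E x → F x) :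
    mass Q E ≤ mass Q F := by
  refine Finset.sum_le_sum fun x _ => mul_le_mul_of_nonneg_left ?_ (seqProb_nonneg hQ x)
  by_cases hx : E x
  · rw [ind_true hx, ind_true (h x hx)]
  · rw [ind_false hx]; exact ind_nonneg _

/-- achievability -/
lemma achiev {M : ℕ} [NeZero M] {α ε : ℝ} (hα : 0 < α) (hε : 0 < ε)
    {P : Fin M → X → ℝ} (hP : ∀ i, IsDist (P i)) (hs : ∀ i, FullSupport (P i)) (D : ℝ)
    (hD : ∀ j i k : Fin M, i ≠ k → D ≤ genDiv (2 * α / (1 + 2 * α)) (P j) (P i) (P k))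
    {δ : ℝ} (hδ : 0 < δ) :
    ∀ᶠ n : ℕ in atTop, ∃ lam : ℝ, 0 ≤ lam ∧
    (∀ Q : Fin M → X → ℝ, (∀ i, IsDist (Q i)) → ∀ j,
      betaM (gutmanM M α lam n) Q j ≤ ε) ∧
    (∀ j, zetaM (gutmanM M α lam n) P j ≤ Real.exp (-((n : ℝ) * (D - δ)))) := by
  choose q hq C hC hLR using fun (j i k : Fin M) => LR hα (hs i) (hs k) (hs j) (hP j)
  have hne : Nonempty X := by
    by_contra h
    rw [not_nonempty_iff] at h
    have := (hP 0).2
    simp at this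
  have hcard : (0 : ℝ) < Fintype.card X := by exact_mod_cast Fintype.card_pos
  have hM0 : (0 : ℝ) < M := by exact_mod_cast Nat.pos_of_ne_zero (NeZero.ne M)
  set C' := 1 + ∑ j, ∑ i, ∑ k, C j i k with hC'
  have hCC : ∀ j i k, C j i k ≤ C' := by
    intro j i k
    have h1 := Finset.single_le_sum (f := fun k => C j i k) (fun k _ => hC j i k) (Finset.mem_univ k)
    have h2 := Finset.single_le_sum (f := fun i => ∑ k, C j i k) (fun i _ => Finset.sum_nonneg fun k _ => hC j i k) (Finset.mem_univ i)
    have h3 := Finset.single_le_sum (f := fun j => ∑ i, ∑ k, C j i k) (fun j _ => Finset.sum_nonneg fun i _ => Finset.sum_nonneg fun k _ => hC j i k) (Finset.mem_univ j)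
    linarith
  have hC'0 : 0 < C' := by
    have : 0 ≤ ∑ j, ∑ i, ∑ k, C j i k := Finset.sum_nonneg fun j _ => Finset.sum_nonneg fun i _ => Finset.sum_nonneg fun k _ => hC j i k
    linarith
  set η := δ / (2 * C') with hη
  have hη0 : 0 < η := by positivity
  set lam := (α / (1 + α)) ^ 2 * η ^ 2 / 4 with hlam
  have hlam0 : 0 < lam := by positivity
  set η' := lam / ((1 + α) * Fintype.card X * 2) with hη'
  have hη'0 : 0 < η' := by positivity
  have hl : (1 + α) * (Fintype.card X * (2 * η')) ≤ lam := by
    rw [hη']; apply le_of_eq; field_simp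
  have ev1 : ∀ᶠ n : ℕ in atTop, (Fintype.card X / η' ^ 2 * (1 / α + 1)) / (n : ℝ) ≤ ε :=
    (tendsto_const_div_atTop_nhds_zero_nat _).eventually (ge_mem_nhds hε)
  have ev2 : ∀ᶠ n : ℕ in atTop, (Real.log (M * M) + C') / (n : ℝ) ≤ δ / 2 :=
    (tendsto_const_div_atTop_nhds_zero_nat _).eventually (ge_mem_nhds (by positivity))
  filter_upwards [ev1, ev2, eventually_gt_atTop 0] with n h1 h2 hn
  have hn' : (0 : ℝ) < n := by exact_mod_cast hn
  refine ⟨lam, hlam0.le, fun Q hQ j => (beta_conc hα hη'0 hn hl hQ j).trans h1, fun j => ?_⟩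
  refine (zeta_upper hP j).trans ?_
  have hb : ∀ i k : Fin M, ind (i ≠ k) *
      ∑ y : Fin n → X, seqProb (P j) y *
        (mass (P i) (fun x => Acc α lam x y) * mass (P k) (fun x => Acc α lam x y)) ≤
      Real.exp (-(n * D) + C' * (n * η + 1)) := by
    intro i k
    by_cases hik : i = k
    · rw [ind_false (not_not.2 hik), zero_mul]; positivity
    rw [ind_true hik, one_mul]
    have hcl : ∀ (x : Fin (trainLen α n) → X) (y : Fin n → X), Acc α lam x y →
        ∀ a, |empDist x a - empDist y a| ≤ η := fun x y h a =>
      GJS_lower (empDist_isDist (trainLen_pos hα hn) x) (empDist_isDist hn y) hα hη0 h a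
    refine (triple_le (q := q j i k) (fun x y => Acc α lam x y) _ fun x x' y hx hx' =>
      (hLR j i k n hn η hη0.le x x' y (hcl x y hx) (hcl x' y hx')).1).trans ?_
    have hle1 : ∑ y : Fin n → X, seqProb (q j i k) y * (mass (q j i k) (fun x : Fin (trainLen α n) → X => Acc α lam x y) * mass (q j i k) (fun x : Fin (trainLen α n) → X => Acc α lam x y)) ≤ 1 := by
      rw [← seqProb_sum (hq j i k) n]
      refine Finset.sum_le_sum fun y _ => mul_le_of_le_one_right (seqProb_nonneg (hq j i k) y) ?_
      exact mul_le_one₀ (mass_le_one (hq j i k) _) (mass_nonneg (hq j i k) _) (mass_le_one (hq j i k) _)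
    refine (mul_le_of_le_one_right (Real.exp_nonneg _) hle1).trans ?_
    rw [Real.exp_le_exp]
    have := mul_le_mul_of_nonneg_left (hD j i k hik) hn'.le
    have := mul_le_mul_of_nonneg_right (hCC j i k) (by positivity : 0 ≤ n * η + 1)
    linarith
  refine (Finset.sum_le_sum fun i _ => Finset.sum_le_sum fun k _ => hb i k).trans ?_
  simp only [Finset.sum_const, Finset.card_univ, Fintype.card_fin, nsmul_eq_mul]
  rw [← mul_assoc, ← Real.exp_log (by positivity : (0 : ℝ) < M * M), ← Real.exp_add, Real.exp_le_exp]
  rw [div_le_iff₀ hn'] at h2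
  have e : C' * (n * η) = n * δ / 2 := by rw [hη]; field_simp
  nlinarith

/-- converse -/
lemma conv {M : ℕ} [NeZero M] (hM : 2 ≤ M) {α ε : ℝ} (hα : 0 < α) (hε : ε < 1)
    {P : Fin M → X → ℝ} (hP : ∀ i, IsDist (P i)) (hs : ∀ i, FullSupport (P i))
    (j i k : Fin M) (hik : i ≠ k) {δ : ℝ} (hδ : 0 < δ) :
    ∀ᶠ n : ℕ in atTop, ∀ τ lam : ℝ,
    (∀ Q : Fin M → X → ℝ, (∀ i, IsDist (Q i)) → ∀ j,
      betaM (gutmanM M α lam n) Q j ≤ ε) →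
    (∀ j, zetaM (gutmanM M α lam n) P j ≤ Real.exp (-((n : ℝ) * τ))) →
    τ ≤ genDiv (2 * α / (1 + 2 * α)) (P j) (P i) (P k) + δ := by
  obtain ⟨q, hq, C, hC, hLR⟩ := LR hα (hs i) (hs k) (hs j) (hP j)
  set D := genDiv (2 * α / (1 + 2 * α)) (P j) (P i) (P k) with hD
  have hM0 : (0 : ℝ) < M := by exact_mod_cast Nat.pos_of_ne_zero (NeZero.ne M)
  set c0 := (1 - ε) / M with hc0
  have hc0p : 0 < c0 := div_pos (by linarith) hM0
  set η := δ / (4 * (C + 1)) with hη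
  have hη0 : 0 < η := by positivity
  have ev1 : ∀ᶠ n : ℕ in atTop, (Fintype.card X / η ^ 2 * (1 / α + 1)) / (n : ℝ) ≤ c0 / 2 :=
    (tendsto_const_div_atTop_nhds_zero_nat _).eventually (ge_mem_nhds (by positivity))
  have ev2 : ∀ᶠ n : ℕ in atTop, (C - Real.log ((c0 / 2) ^ 2)) / (n : ℝ) ≤ δ / 2 :=
    (tendsto_const_div_atTop_nhds_zero_nat _).eventually (ge_mem_nhds (by positivity))
  filter_upwards [ev1, ev2, eventually_gt_atTop 0] with n h1 h2 hn τ lam hbeta hzeta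
  have hn' : (0 : ℝ) < n := by exact_mod_cast hn
  have hj1 : (⟨1, by omega⟩ : Fin M) ≠ 0 := by
    intro h
    have := congrArg Fin.val h
    simp at this
  have hb := (beta_lower (α := α) (lam := lam) (n := n) hq _ hj1).trans (hbeta _ (fun _ => hq) _)
  set E : (Fin (trainLen α n) → X) → (Fin n → X) → Prop :=
    fun x y => Acc α lam x y ∧ Typ q η x ∧ Typ q η y with hE
  have hms := typ_mass_sum hq hα hn hη0
  set f : (Fin n → X) → ℝ := fun y => mass q (fun x => E x y) with hf
  have hf1 : ∀ y : Fin n → X, mass q (fun x : Fin (trainLen α n) → X => Acc α lam x y) ≤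
      f y + mass q (fun x : Fin (trainLen α n) → X => ¬ Typ q η x) + ind (¬ Typ q η y) := by
    intro y
    by_cases hy : Typ q η y
    · rw [ind_false (not_not.2 hy), add_zero]
      simp only [hf]
      unfold mass
      rw [← Finset.sum_add_distrib]
      refine Finset.sum_le_sum fun x _ => ?_
      rw [← mul_add]
      refine mul_le_mul_of_nonneg_left ?_ (seqProb_nonneg hq x)
      by_cases hx : Typ q η x
      · by_cases hA : Acc α lam x y
        · rw [ind_true hA, ind_true (show E x y from ⟨hA, hx, hy⟩)]
          linarith [ind_nonneg (¬ Typ q η x)]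
        · rw [ind_false hA]
          exact add_nonneg (ind_nonneg _) (ind_nonneg _)
      · rw [ind_true hx]
        linarith [ind_le_one (Acc α lam x y), ind_nonneg (E x y)]
    · rw [ind_true hy]
      have a1 := mass_le_one hq (fun x : Fin (trainLen α n) → X => Acc α lam x y)
      have a2 := mass_nonneg hq (fun x : Fin (trainLen α n) → X => ¬ Typ q η x)
      have a3 : 0 ≤ f y := mass_nonneg hq _
      linarith
  have hf2 : ∑ y : Fin n → X, seqProb q y * mass q (fun x : Fin (trainLen α n) → X => Acc α lam x y) ≤
      ∑ y, seqProb q y * f y + (mass q (fun x : Fin (trainLen α n) → X => ¬ Typ q η x) +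
        mass q (fun y : Fin n → X => ¬ Typ q η y)) := by
    refine (Finset.sum_le_sum fun y _ => mul_le_mul_of_nonneg_left (hf1 y) (seqProb_nonneg hq y)).trans
      (le_of_eq ?_)
    simp_rw [mul_add, Finset.sum_add_distrib]
    rw [← Finset.sum_mul, seqProb_sum hq, one_mul, add_assoc]
    rfl
  set c := ∑ y, seqProb q y * f y with hc
  have hcc : c0 / 2 ≤ c := by
    have : c0 ≤ ∑ y : Fin n → X, seqProb q y * mass q (fun x : Fin (trainLen α n) → X => Acc α lam x y) := by
      rw [hc0, div_le_iff₀ hM0]; linarith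
    linarith
  have hcs : (c0 / 2) ^ 2 ≤ ∑ y, seqProb q y * (f y * f y) := by
    have h0 : 0 ≤ ∑ y, seqProb q y * (f y - c) ^ 2 :=
      Finset.sum_nonneg fun y _ => mul_nonneg (seqProb_nonneg hq y) (sq_nonneg _)
    have e : ∑ y, seqProb q y * (f y - c) ^ 2 =
        ∑ y, seqProb q y * (f y * f y) - 2 * c * c + c ^ 2 := by
      have e' : ∀ y, seqProb q y * (f y - c) ^ 2 =
        seqProb q y * (f y * f y) - 2 * c * (seqProb q y * f y) + seqProb q y * c ^ 2 := fun y => by ring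
      simp_rw [e']
      rw [Finset.sum_add_distrib, Finset.sum_sub_distrib, ← Finset.mul_sum, ← Finset.sum_mul,
        seqProb_sum hq, ← hc]
      ring
    rw [e] at h0
    have : (c0 / 2) ^ 2 ≤ c ^ 2 := by gcongr
    linarith
  have hcl : ∀ (x : Fin (trainLen α n) → X) (y : Fin n → X), E x y →
      ∀ a, |empDist x a - empDist y a| ≤ 2 * η := by
    rintro x y ⟨_, hx, hy⟩ a
    have h1 := abs_le.1 (hx a)
    have h2 := abs_le.1 (hy a)
    rw [abs_le]; constructor <;> linarith
  have hge := triple_ge (q := q) (Pi := P i) (Pk := P k) (Pj := P j) E _ fun x x' y hx hx' =>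
    (hLR n hn (2 * η) (by positivity) x x' y (hcl x y hx) (hcl x' y hx')).2
  have hmono : ∑ y : Fin n → X, seqProb (P j) y * (mass (P i) (fun x => E x y) * mass (P k) (fun x => E x y))
      ≤ ∑ y : Fin n → X, seqProb (P j) y *
        (mass (P i) (fun x => Acc α lam x y) * mass (P k) (fun x => Acc α lam x y)) := by
    refine Finset.sum_le_sum fun y _ => mul_le_mul_of_nonneg_left ?_ (seqProb_nonneg (hP j) y)
    exact mul_le_mul (mass_mono (hP i) fun x h => h.1) (mass_mono (hP k) fun x h => h.1)
      (mass_nonneg (hP k) _) (mass_nonneg (hP i) _)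
  have hz := (hge.trans hmono).trans ((zeta_lower hP j i k hik).trans (hzeta j))
  have hz2 := (mul_le_mul_of_nonneg_left hcs (Real.exp_nonneg _)).trans hz
  rw [← Real.exp_log (by positivity : 0 < (c0 / 2) ^ 2), ← Real.exp_add, Real.exp_le_exp] at hz2
  rw [div_le_iff₀ hn'] at h2
  have e : C * (n * (2 * η)) ≤ n * δ / 2 := by
    have : (C + 1) * η = δ / 4 := by rw [hη]; field_simp
    have : C * η ≤ δ / 4 := by linarith
    nlinarith
  have : n * τ ≤ n * (D + δ) := by linarith
  exact le_of_mul_le_mul_left this hn'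

lemma genDiv_nonneg {α : ℝ} (hα : 0 < α) {Pj Pi Pk : X → ℝ} (hj : IsDist Pj) (hi : IsDist Pi)
    (hk : IsDist Pk) : 0 ≤ genDiv (2 * α / (1 + 2 * α)) Pj Pi Pk := by
  unfold genDiv
  set γ := 2 * α / (1 + 2 * α) with hγ
  have h0 : 0 ≤ γ := by positivity
  have h1 : γ < 1 := by rw [hγ, div_lt_one (by positivity)]; linarith
  refine mul_nonneg_of_nonpos_of_nonpos (div_nonpos_of_nonneg_of_nonpos zero_le_one (by linarith)) ?_
  refine Real.log_nonpos (Finset.sum_nonneg fun x _ => ?_) ?_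
  · exact mul_nonneg (mul_nonneg (Real.rpow_nonneg (hj.1 x) _) (Real.rpow_nonneg (hi.1 x) _))
      (Real.rpow_nonneg (hk.1 x) _)
  · calc _ ≤ ∑ x, ((1 - γ) * Pj x + γ / 2 * Pi x + γ / 2 * Pk x) :=
        Finset.sum_le_sum fun x _ => Real.geom_mean_le_arith_mean3_weighted (by linarith)
          (by linarith) (by linarith) (hj.1 x) (hi.1 x) (hk.1 x) (by ring)
      _ = 1 := by
        rw [Finset.sum_add_distrib, Finset.sum_add_distrib, ← Finset.mul_sum, ← Finset.mul_sum,
          ← Finset.mul_sum, hj.2, hi.2, hk.2]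
        ring

/-- Proposition 2 of the paper: Gutman's M-ary test in the dual setting:
`τ*(n,α,ε|Ψ_n^Gut,P) → min_{j} min_{i≠k} D_{2α/(1+2α)}(P_j,P_i,P_k)` as `n → ∞`. -/
theorem tauStarGutM_limit {X : Type*} [Fintype X] [DecidableEq X]
    (M : ℕ) [NeZero M] (hM : 2 ≤ M)
    (α ε : ℝ) (hα : 0 < α) (hε : ε ∈ Set.Ioo (0 : ℝ) 1)
    (P : Fin M → X → ℝ) (hP : ∀ i, IsDist (P i)) (hs : ∀ i, FullSupport (P i)) :
    Filter.Tendsto (fun n : ℕ => tauStarGutM M α n ε P) Filter.atTop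
      (nhds (sInf {v : ℝ | ∃ j i k : Fin M, i ≠ k ∧
        v = genDiv (2 * α / (1 + 2 * α)) (P j) (P i) (P k)})) := by
  set V : Set ℝ := {v : ℝ | ∃ j i k : Fin M, i ≠ k ∧
        v = genDiv (2 * α / (1 + 2 * α)) (P j) (P i) (P k)} with hV
  have hfin : V.Finite := by
    refine (Set.finite_range (fun p : Fin M × Fin M × Fin M =>
      genDiv (2 * α / (1 + 2 * α)) (P p.1) (P p.2.1) (P p.2.2))).subset ?_
    rintro v ⟨j, i, k, -, rfl⟩
    exact ⟨(j, i, k), rfl⟩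
  have hne : V.Nonempty := ⟨_, 0, ⟨0, by omega⟩, ⟨1, by omega⟩, by simp, rfl⟩
  have hmem : sInf V ∈ V := hne.csInf_mem hfin
  have hlow : ∀ j i k : Fin M, i ≠ k → sInf V ≤ genDiv (2 * α / (1 + 2 * α)) (P j) (P i) (P k) :=
    fun j i k h => csInf_le hfin.bddBelow ⟨j, i, k, h, rfl⟩
  obtain ⟨j, i, k, hik, hD⟩ := hmem
  have hD0 : 0 ≤ sInf V := by rw [hD]; exact genDiv_nonneg hα (hP j) (hP i) (hP k)
  rw [Metric.tendsto_nhds]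
  intro δ hδ
  have hδ2 : 0 < δ / 2 := by positivity
  filter_upwards [achiev hα hε.1 hP hs (sInf V) hlow hδ2, conv hM hα hε.2 hP hs j i k hik hδ2]
    with n ha hc
  rw [← hD] at hc
  have hub : ∀ τ ∈ {τ : ℝ | 0 ≤ τ ∧ ∃ lam : ℝ, 0 ≤ lam ∧
    (∀ Q : Fin M → X → ℝ, (∀ i, IsDist (Q i)) → ∀ j,
      betaM (gutmanM M α lam n) Q j ≤ ε) ∧
    (∀ j, zetaM (gutmanM M α lam n) P j ≤ Real.exp (-((n : ℝ) * τ)))}, τ ≤ sInf V + δ / 2 := by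
    rintro τ ⟨_, lam, _, h1, h2⟩
    exact hc τ lam h1 h2
  have h1 : tauStarGutM M α n ε P ≤ sInf V + δ / 2 := Real.sSup_le hub (by linarith)
  have h2 : sInf V - δ / 2 ≤ tauStarGutM M α n ε P := by
    rcases le_total 0 (sInf V - δ / 2) with h | h
    · obtain ⟨lam, h3, h4, h5⟩ := ha
      exact le_csSup ⟨_, hub⟩ ⟨h, lam, h3, h4, h5⟩
    · exact h.trans (Real.sSup_nonneg fun τ hτ => hτ.1)
  rw [Real.dist_eq, abs_lt]
  constructor <;> linarith

end Classification
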